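/- Let β > 0 and let c ∈ (e^{-2/β}, 1). Set b = (1/2)βc(-ln c) and λ = 4βc²(-ln c)(1 + (1/2)β ln c). Then 0 < b < c, λ > 0, and the function θ(r) = -2 ln(c - b + b r²) satisfies the radial Gelfand equation θ''(r) + θ'(r)/r + λ e^{θ(r)} = 0 for all r ∈ (0, 1), together with the Robin boundary condition θ'(1) = -β θ(1). -/

import Mathlib

open Real Set

/-!
With `u = c - b + b r²`, the profile `θ = -2 log u` has `θ' = -4 b r / u`, hence
`θ'' + θ' / r = -8 b (c - b) / u²`, while `e^θ = 1 / u²`. So `θ` solves the Gelfand equation with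
`λ = 8 b (c - b)`. Since `u(1) = c`, the Robin condition reads `-4 b / c = 2 β log c` and determines
`b`; for this `b`, `c - b = c (1 + β log c / 2)`, which is positive exactly when `c > e^{-2/β}`.
-/

/-- The radial steady-state profile `θ_{b,c}` of the heating problem. It is meaningful where
`c - b + b * r ^ 2` is positive, in particular for every `r` when `0 < b < c`. -/
noncomputable def radialProfile (b c r : ℝ) : ℝ :=
  -2 * log (c - b + b * r ^ 2)

/-- The value of `b` for which `radialProfile b c` satisfies the Robin condition with cooling
coefficient `β` at `r = 1`. -/
noncomputable def robinParameter (β c : ℝ) : ℝ :=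
  β * c * (-log c) / 2

section RadialProfile

variable {b c r : ℝ}

theorem hasDerivAt_sub_add_mul_sq (b c r : ℝ) :
    HasDerivAt (fun s ↦ c - b + b * s ^ 2) (2 * b * r) r :=
  (((hasDerivAt_pow 2 r).const_mul b).const_add (c - b)).congr_deriv (by push_cast; ring)

theorem hasDerivAt_radialProfile (hu : c - b + b * r ^ 2 ≠ 0) :
    HasDerivAt (radialProfile b c) (-4 * b * r / (c - b + b * r ^ 2)) r :=
  (((hasDerivAt_sub_add_mul_sq b c r).log hu).const_mul (-2)).congr_deriv (by ring)

theorem hasDerivAt_deriv_radialProfile (hu : c - b + b * r ^ 2 ≠ 0) :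
    HasDerivAt (deriv (radialProfile b c))
      (-4 * b * (c - b - b * r ^ 2) / (c - b + b * r ^ 2) ^ 2) r := by
  have hu_near : ∀ᶠ s in nhds r, c - b + b * s ^ 2 ≠ 0 :=
    (hasDerivAt_sub_add_mul_sq b c r).continuousAt.eventually_ne hu
  have hderiv : deriv (radialProfile b c) =ᶠ[nhds r]
      fun s ↦ -4 * b * s / (c - b + b * s ^ 2) :=
    hu_near.mono fun _ hs ↦ (hasDerivAt_radialProfile hs).deriv
  have hquot := ((hasDerivAt_id' r).const_mul (-4 * b)).fun_div (hasDerivAt_sub_add_mul_sq b c r) hu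
  exact (hquot.congr_of_eventuallyEq hderiv).congr_deriv (by ring)

theorem exp_radialProfile (hu : c - b + b * r ^ 2 ≠ 0) :
    exp (radialProfile b c r) = ((c - b + b * r ^ 2) ^ 2)⁻¹ := by
  have hlog : radialProfile b c r = -log ((c - b + b * r ^ 2) ^ 2) := by
    rw [log_pow, Nat.cast_ofNat, radialProfile, neg_mul]
  rw [hlog, exp_neg, exp_log (by positivity)]

theorem radialProfile_gelfand_eq (hr : r ≠ 0) (hu : c - b + b * r ^ 2 ≠ 0) :
    deriv (deriv (radialProfile b c)) r + deriv (radialProfile b c) r / r +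
      8 * b * (c - b) * exp (radialProfile b c r) = 0 := by
  rw [(hasDerivAt_deriv_radialProfile hu).deriv, (hasDerivAt_radialProfile hu).deriv,
    exp_radialProfile hu]
  field_simp
  ring

theorem radialProfile_robin_iff {β : ℝ} (hc : c ≠ 0) :
    deriv (radialProfile b c) 1 = -β * radialProfile b c 1 ↔ b = robinParameter β c := by
  have hu_one : c - b + b * 1 ^ 2 = c := by ring
  rw [(hasDerivAt_radialProfile (by rwa [hu_one])).deriv, radialProfile, hu_one,
    div_eq_iff hc, robinParameter]
  constructor <;> intro h <;> linarith

end RadialProfile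

section RobinParameter

variable {β c : ℝ}

theorem sub_robinParameter (β c : ℝ) : c - robinParameter β c = c * (1 + β * log c / 2) := by
  rw [robinParameter]
  ring

theorem robinParameter_pos_iff (hβ : 0 < β) (hc : 0 < c) : 0 < robinParameter β c ↔ c < 1 := by
  rw [robinParameter, div_pos_iff_of_pos_right two_pos, mul_pos_iff_of_pos_left (mul_pos hβ hc),
    neg_pos, log_neg_iff hc]

theorem robinParameter_lt_self_iff (hβ : 0 < β) (hc : 0 < c) :
    robinParameter β c < c ↔ exp (-2 / β) < c := by
  rw [← sub_pos, sub_robinParameter, mul_pos_iff_of_pos_left hc, ← lt_log_iff_exp_lt hc,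
    div_lt_iff₀ hβ]
  constructor <;> intro h <;> linarith

end RobinParameter

/-- For β > 0 and c ∈ (e^{-2/β}, 1), with b = (1/2)βc(-ln c) and
λ = 4βc²(-ln c)(1 + (1/2)β ln c), we have 0 < b < c, λ > 0, and
θ(r) = -2 ln(c - b + b r²) solves the radial Gelfand equation
θ'' + θ'/r + λ e^θ = 0 on (0,1) with Robin condition θ'(1) = -β θ(1). -/
theorem radial_steady_state_voltage
    (β c b lam : ℝ) (hβ : 0 < β)
    (hc : c ∈ Set.Ioo (Real.exp (-2 / β)) 1)
    (hb : b = β * c * (-Real.log c) / 2)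
    (hlam : lam = 4 * β * c ^ 2 * (-Real.log c) * (1 + β * Real.log c / 2))
    (θ : ℝ → ℝ) (hθ : ∀ r : ℝ, θ r = -2 * Real.log (c - b + b * r ^ 2)) :
    0 < b ∧ b < c ∧ 0 < lam ∧
    (∀ r ∈ Set.Ioo (0 : ℝ) 1,
      deriv (deriv θ) r + deriv θ r / r + lam * Real.exp (θ r) = 0) ∧
    deriv θ 1 = -β * θ 1 := by
  obtain rfl : θ = radialProfile b c := funext hθ
  have hb_robin : b = robinParameter β c := hb
  have hc_pos : 0 < c := (exp_pos _).trans hc.1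
  have hb_pos : 0 < b := hb_robin ▸ (robinParameter_pos_iff hβ hc_pos).2 hc.2
  have hb_lt : b < c := hb_robin ▸ (robinParameter_lt_self_iff hβ hc_pos).2 hc.1
  have hcb_pos : 0 < c - b := sub_pos.2 hb_lt
  have hlam_eq : lam = 8 * b * (c - b) := by
    rw [hlam, hb_robin, sub_robinParameter, robinParameter]
    ring
  refine ⟨hb_pos, hb_lt, hlam_eq ▸ mul_pos (by positivity) hcb_pos, fun r hr ↦ ?_,
    (radialProfile_robin_iff hc_pos.ne').2 hb_robin⟩
  rw [hlam_eq]
  exact radialProfile_gelfand_eq hr.1.ne' (by positivity)
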